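/- For every dimension d ≥ 1 there exists a constant c(d) > 0, independent of N, such that for every prime number N there exists a parameter a ∈ {1,…,N−1} for which the Korobov lattice Λ = (1/N)(1,a,a²,…,a^{d−1})ℤ + ℤ^d satisfies λ₁(Λ⊥) ≥ c(d) · N^{1/d}. Consequently, the mesh ratio of this lattice satisfies ρ(Λ) ≤ d · C_d · N / (λ₁(Λ⊥))^d ≤ d · C_d / (c(d))^d, a bound independent of N, where C_d = 2^d Γ(1+d/2)/π^{d/2}. -/

import Mathlib

open scoped RealInnerProductSpace

noncomputable section

/-- `ℝ^d` with the Euclidean norm. -/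
abbrev Euc (d : ℕ) := EuclideanSpace ℝ (Fin d)

/-- `Λ` is the full-rank lattice generated by the columns of the invertible matrix `T`. -/
def IsLatticeOf {d : ℕ} (Λ : Set (Euc d)) (T : Matrix (Fin d) (Fin d) ℝ) : Prop :=
  IsUnit T.det ∧ Λ = { v : Euc d | ∃ k : Fin d → ℤ, ∀ i, v i = ∑ j, T i j * (k j : ℝ) }

/-- Covering radius of `Λ` with respect to all of `ℝ^d`:
`h(Λ) = sup_{x ∈ ℝ^d} inf_{y ∈ Λ} ‖x - y‖₂`. -/
def covRad {d : ℕ} (Λ : Set (Euc d)) : ℝ :=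
  ⨆ x : Euc d, sInf (Set.image (dist x) Λ)

/-- Separation radius of a lattice: half the length of the shortest nonzero vector. -/
def sepRad {d : ℕ} (Λ : Set (Euc d)) : ℝ :=
  (1 / 2) * sInf (Set.image norm (Λ \ {0}))

/-- Mesh ratio `ρ(Λ) = h(Λ)/q(Λ)` of a lattice. -/
def meshRatio {d : ℕ} (Λ : Set (Euc d)) : ℝ := covRad Λ / sepRad Λ

/-- The `j`-th successive minimum of `Λ` with respect to the Euclidean unit ball:
`λ_j(Λ) = inf { r > 0 : dim span(Λ ∩ rB_d) ≥ j }`. -/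
def succMin {d : ℕ} (Λ : Set (Euc d)) (j : ℕ) : ℝ :=
  sInf { r : ℝ | 0 < r ∧
    j ≤ Module.finrank ℝ (Submodule.span ℝ (Λ ∩ Metric.closedBall (0 : Euc d) r)) }

/-- The dual lattice `Λ⊥ = { y : x·y ∈ ℤ for all x ∈ Λ }`. -/
def dualLat {d : ℕ} (Λ : Set (Euc d)) : Set (Euc d) :=
  { y | ∀ x ∈ Λ, ∃ n : ℤ, ⟪x, y⟫ = (n : ℝ) }

/-- The closed unit cube `[0,1]^d`. -/
def unitCube (d : ℕ) : Set (Euc d) := { x | ∀ i, 0 ≤ x i ∧ x i ≤ 1 }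

/-- The half-open unit cube `[0,1)^d`. -/
def halfOpenCube (d : ℕ) : Set (Euc d) := { x | ∀ i, 0 ≤ x i ∧ x i < 1 }

/-- Covering radius of a point set `P` with respect to the unit cube `[0,1]^d`. -/
def covRadCube {d : ℕ} (P : Set (Euc d)) : ℝ :=
  ⨆ x : unitCube d, sInf (Set.image (dist (x : Euc d)) P)

/-- Separation radius of a point set:
`q(P) = (1/2) min_{x ≠ y ∈ P} ‖x - y‖₂`. -/
def sepRadSet {d : ℕ} (P : Set (Euc d)) : ℝ :=
  (1 / 2) * sInf { r : ℝ | ∃ x ∈ P, ∃ y ∈ P, x ≠ y ∧ r = dist x y }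

/-- Mesh ratio `ρ(P) = h(P)/q(P)` of a point set with respect to `[0,1]^d`. -/
def meshRatioSet {d : ℕ} (P : Set (Euc d)) : ℝ := covRadCube P / sepRadSet P

/-- The constant `C_d = 2^d Γ(1+d/2) / π^{d/2}`. -/
def Cd (d : ℕ) : ℝ := 2 ^ d * Real.Gamma (1 + (d : ℝ) / 2) / Real.pi ^ ((d : ℝ) / 2)

/-- The Korobov lattice `Λ = (1/N)(1, a, a², …, a^{d-1})ℤ + ℤ^d ⊂ ℝ^d`. -/
def korobovLat (d N a : ℕ) : Set (Euc d) :=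
  { v | ∃ n : ℤ, ∃ m : Fin d → ℤ,
      ∀ i, v i = (n : ℝ) * (a : ℝ) ^ (i : ℕ) / N + (m i : ℝ) }

/-!
**A good parameter.** A vector `h` of the dual Korobov lattice is an integer vector whose polynomial
`∑ i, h i * X ^ i` vanishes at `a` modulo `N`. There are fewer than `(2 * R + 1) ^ d` nonzero
polynomials with coefficients bounded by `R`, each with at most `d - 1` roots modulo `N`, so for
`R` of order `N ^ (1 / d)` some nonzero residue `a` is a root of none of them.

**Covering radius.** Minkowski's theorem for cubes, applied to a lattice `L` of rank `n` and to its
dual, yields nonzero vectors of both with product of lengths at most `n`. Hence, if nonzero dual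
vectors have length at least `μ`, then `L` has a nonzero vector `v` with `‖v‖ ≤ n / μ`. Projecting
`L` to the orthogonal complement of `v` preserves the hypothesis on the dual, so induction and
rounding along `v` bound the covering radius.

**Separation radius.** If `x ∈ L` is short, then the cylinder of length `2 / ‖x‖` along `x` and
radius `μ` across has large volume and contains a nonzero dual vector `y` by Minkowski's theorem.
Since `⟪y, x⟫` is an integer of absolute value less than `1`, it vanishes, so `‖y‖ < μ`.

The quotient of the two bounds involves `C_{d-1}` and is compared with `d * C_d` by the
log-convexity of `Γ`.
-/

open MeasureTheory Module Submodule ZLattice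

section InnerDual

variable {E : Type*} [NormedAddCommGroup E] [InnerProductSpace ℝ E]

lemma nondegenerate_innerₗ : (innerₗ E : LinearMap.BilinForm ℝ E).Nondegenerate :=
  ⟨fun x hx => inner_self_eq_zero.1 (hx x), fun x hx => inner_self_eq_zero.1 (hx x)⟩

/-- The dual `{y | ⟪x, y⟫ ∈ ℤ for all x ∈ L}` of a subgroup `L` of a Euclidean space, bundled as a
`ℤ`-submodule so that Mathlib's theory of `ℤ`-lattices and their covolumes applies to it. -/
def innerDual (L : Submodule ℤ E) : Submodule ℤ E :=
  LinearMap.BilinForm.dualSubmodule (innerₗ E) L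

lemma mem_innerDual {L : Submodule ℤ E} {y : E} :
    y ∈ innerDual L ↔ ∀ x ∈ L, ∃ n : ℤ, ⟪x, y⟫ = n := by
  simp only [innerDual, LinearMap.BilinForm.mem_dualSubmodule, mem_one, innerₗ_apply_apply,
    real_inner_comm _ y, algebraMap_int_eq, eq_intCast, eq_comm]

lemma mem_innerDual_innerDual {L : Submodule ℤ E} {x : E} (hx : x ∈ L) :
    x ∈ innerDual (innerDual L) :=
  mem_innerDual.2 fun y hy => by
    simpa only [real_inner_comm] using mem_innerDual.1 hy x hx

lemma innerDual_span_basis {ι : Type*} [Finite ι] [DecidableEq ι] (b : Basis ι ℝ E) :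
    innerDual (span ℤ (Set.range b)) =
      span ℤ (Set.range (LinearMap.BilinForm.dualBasis _ nondegenerate_innerₗ b)) :=
  LinearMap.BilinForm.dualSubmodule_span_of_basis _ nondegenerate_innerₗ b

lemma dualLat_coe {d : ℕ} (L : Submodule ℤ (Euc d)) :
    dualLat (L : Set (Euc d)) = (innerDual L : Set (Euc d)) := by
  ext y
  exact mem_innerDual.symm

variable [FiniteDimensional ℝ E]

lemma exists_basis_span_eq (L : Submodule ℤ E) [DiscreteTopology L] [IsZLattice ℝ L] :
    ∃ b : Basis (Fin (finrank ℝ E)) ℝ E, span ℤ (Set.range b) = L := by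
  have := ZLattice.module_free ℝ L
  have := ZLattice.module_finite ℝ L
  let b := (finBasis ℤ L).reindex (finCongr (ZLattice.rank ℝ L))
  exact ⟨b.ofZLatticeBasis ℝ L, b.ofZLatticeBasis_span ℝ L⟩

instance discreteTopology_innerDual (L : Submodule ℤ E) [DiscreteTopology L] [IsZLattice ℝ L] :
    DiscreteTopology (innerDual L) := by
  obtain ⟨b, rfl⟩ := exists_basis_span_eq L
  rw [innerDual_span_basis]
  infer_instance

instance isZLattice_innerDual (L : Submodule ℤ E) [DiscreteTopology L] [IsZLattice ℝ L] :
    IsZLattice ℝ (innerDual L) where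
  span_top := by
    obtain ⟨b, rfl⟩ := exists_basis_span_eq L
    rw [innerDual_span_basis]
    exact IsZLattice.span_top

variable [MeasurableSpace E] [BorelSpace E]

lemma covolume_span_basis {ι : Type*} [Fintype ι] [DecidableEq ι] (e : OrthonormalBasis ι ℝ E)
    (b : Basis ι ℝ E) : covolume (span ℤ (Set.range b)) = |e.toBasis.det b| := by
  rw [covolume_eq_measure_fundamentalDomain _ _ (ZSpan.isAddFundamentalDomain b volume),
    ZSpan.measureReal_fundamentalDomain b volume e.toBasis, measureReal_def,
    measure_congr (ZSpan.fundamentalDomain_ae_parallelepiped e.toBasis volume),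
    OrthonormalBasis.coe_toBasis, e.volume_parallelepiped, ENNReal.toReal_one, mul_one]

lemma covolume_innerDual (L : Submodule ℤ E) [DiscreteTopology L] [IsZLattice ℝ L] :
    covolume (innerDual L) = (covolume L)⁻¹ := by
  obtain ⟨b, rfl⟩ := exists_basis_span_eq L
  let b' := LinearMap.BilinForm.dualBasis _ nondegenerate_innerₗ b
  let e := stdOrthonormalBasis ℝ E
  have hmul : (e.toBasis.toMatrix b').transpose * e.toBasis.toMatrix b = 1 := by
    ext i j
    calc ((e.toBasis.toMatrix b').transpose * e.toBasis.toMatrix b) i j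
        = ∑ k, ⟪b' i, e k⟫ * ⟪e k, b j⟫ := by
          simp only [Matrix.mul_apply, Matrix.transpose_apply, Basis.toMatrix_apply,
            OrthonormalBasis.coe_toBasis_repr_apply, e.repr_apply_apply, real_inner_comm (b' i)]
      _ = ⟪b' i, b j⟫ := e.sum_inner_mul_inner _ _
      _ = (1 : Matrix _ _ ℝ) i j :=
          (LinearMap.BilinForm.apply_dualBasis_left nondegenerate_innerₗ b i j).trans
            (by simp only [Matrix.one_apply, eq_comm])
  have hdet : e.toBasis.det b' * e.toBasis.det b = 1 := by
    rw [Basis.det_apply, Basis.det_apply, ← Matrix.det_transpose, ← Matrix.det_mul, hmul,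
      Matrix.det_one]
  simp only [innerDual_span_basis, covolume_span_basis e]
  rw [← abs_inv, eq_inv_of_mul_eq_one_left hdet]

end InnerDual

section Minkowski

variable {E : Type*} [NormedAddCommGroup E] [NormedSpace ℝ E] [FiniteDimensional ℝ E]
  [MeasurableSpace E] [BorelSpace E] (μ : Measure E) [μ.IsAddHaarMeasure]
  (L : Submodule ℤ E) [DiscreteTopology L] [IsZLattice ℝ L] {s : Set E}

lemma exists_isAddFundamentalDomain_measure_eq_covolume :
    ∃ F : Set E, IsAddFundamentalDomain L F μ ∧ μ F = ENNReal.ofReal (covolume L μ) := by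
  have := ZLattice.module_free ℝ L
  have := ZLattice.module_finite ℝ L
  have hF := ZLattice.isAddFundamentalDomain (finBasis ℤ L) μ
  refine ⟨_, hF, ?_⟩
  rw [covolume_eq_measure_fundamentalDomain L μ hF,
    ofReal_measureReal (ZSpan.fundamentalDomain_isBounded _).measure_lt_top.ne]

lemma exists_ne_zero_mem_of_covolume_mul_lt_measure (hsymm : ∀ x ∈ s, -x ∈ s)
    (hconv : Convex ℝ s) (h : ENNReal.ofReal (covolume L μ) * 2 ^ finrank ℝ E < μ s) :
    ∃ x ∈ L, x ≠ 0 ∧ x ∈ s := by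
  obtain ⟨F, hF, hvol⟩ := exists_isAddFundamentalDomain_measure_eq_covolume μ L
  have : Countable L.toAddSubgroup := inferInstanceAs (Countable L)
  obtain ⟨⟨x, hxL⟩, hx0, hxs⟩ := exists_ne_zero_mem_lattice_of_measure_mul_two_pow_lt_measure
    (L := L.toAddSubgroup) hF hsymm hconv (hvol ▸ h)
  exact ⟨x, hxL, fun h0 => hx0 (Subtype.ext h0), hxs⟩

lemma exists_ne_zero_mem_of_covolume_mul_le_measure [Nontrivial E] (hsymm : ∀ x ∈ s, -x ∈ s)
    (hconv : Convex ℝ s) (hcomp : IsCompact s)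
    (h : ENNReal.ofReal (covolume L μ) * 2 ^ finrank ℝ E ≤ μ s) :
    ∃ x ∈ L, x ≠ 0 ∧ x ∈ s := by
  obtain ⟨F, hF, hvol⟩ := exists_isAddFundamentalDomain_measure_eq_covolume μ L
  have : Countable L.toAddSubgroup := inferInstanceAs (Countable L)
  have : DiscreteTopology L.toAddSubgroup := inferInstanceAs (DiscreteTopology L)
  obtain ⟨⟨x, hxL⟩, hx0, hxs⟩ := exists_ne_zero_mem_lattice_of_measure_mul_two_pow_le_measure
    (L := L.toAddSubgroup) hF hsymm hconv hcomp (hvol ▸ h)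
  exact ⟨x, hxL, fun h0 => hx0 (Subtype.ext h0), hxs⟩

end Minkowski

section ShortVectors

lemma discreteTopology_of_le_norm {E : Type*} [NormedAddCommGroup E] {L : Submodule ℤ E}
    {r : ℝ} (hr : 0 < r) (h : ∀ x ∈ L, x ≠ 0 → r ≤ ‖x‖) : DiscreteTopology L := by
  rw [discreteTopology_iff_isOpen_singleton_zero, Metric.isOpen_singleton_iff]
  refine ⟨r, hr, fun x hx => ?_⟩
  by_contra hx0
  rw [dist_zero_right] at hx
  exact hx.not_ge (h x x.2 (by simpa using hx0))

variable {E : Type*} [NormedAddCommGroup E] [InnerProductSpace ℝ E]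

lemma norm_le_sqrt_card_mul_of_abs_repr_le {ι : Type*} [Fintype ι] (e : OrthonormalBasis ι ℝ E)
    {x : E} {r : ℝ} (hr : 0 ≤ r) (hx : ∀ i, |e.repr x i| ≤ r) :
    ‖x‖ ≤ √(Fintype.card ι) * r := by
  refine abs_le_of_sq_le_sq' ?_ (by positivity) |>.2
  calc ‖x‖ ^ 2 = ∑ i, e.repr x i ^ 2 := by
        rw [← e.repr.norm_map, EuclideanSpace.real_norm_sq_eq]
    _ ≤ ∑ _i : ι, r ^ 2 :=
        Finset.sum_le_sum fun i _ => sq_le_sq' (abs_le.1 (hx i)).1 (abs_le.1 (hx i)).2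
    _ = (√(Fintype.card ι) * r) ^ 2 := by
        rw [mul_pow, Real.sq_sqrt (Nat.cast_nonneg _), Finset.sum_const, nsmul_eq_mul,
          Finset.card_univ]

variable [FiniteDimensional ℝ E]

section Volume

variable [MeasurableSpace E] [BorelSpace E]

lemma exists_ne_zero_norm_le_sqrt_mul_covolume_rpow [Nontrivial E] (L : Submodule ℤ E)
    [DiscreteTopology L] [IsZLattice ℝ L] :
    ∃ x ∈ L, x ≠ 0 ∧ ‖x‖ ≤ √(finrank ℝ E) * covolume L ^ (1 / (finrank ℝ E : ℝ)) := by
  let e := stdOrthonormalBasis ℝ E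
  have hcov := covolume_pos L volume
  set r := covolume L ^ (1 / (finrank ℝ E : ℝ))
  have hr : 0 ≤ r := by positivity
  have hrn : r ^ finrank ℝ E = covolume L := by
    rw [← Real.rpow_mul_natCast hcov.le,
      one_div_mul_cancel (Nat.cast_ne_zero.2 finrank_pos.ne'), Real.rpow_one]
  let f : E ≃L[ℝ] (Fin (finrank ℝ E) → ℝ) :=
    e.repr.toContinuousLinearEquiv.trans (EuclideanSpace.equiv _ ℝ)
  have hf : MeasurePreserving f :=
    (PiLp.volume_preserving_ofLp _).comp e.measurePreserving_repr
  have hvol : volume (f ⁻¹' Metric.closedBall 0 r) =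
      ENNReal.ofReal (covolume L) * 2 ^ finrank ℝ E := by
    rw [hf.measure_preimage measurableSet_closedBall.nullMeasurableSet,
      Real.volume_pi_closedBall _ hr, Fintype.card_fin, mul_pow, hrn, mul_comm,
      ENNReal.ofReal_mul hcov.le, ENNReal.ofReal_pow zero_le_two, ENNReal.ofReal_ofNat]
  obtain ⟨x, hxL, hx0, hx⟩ := exists_ne_zero_mem_of_covolume_mul_le_measure volume L
    (s := f ⁻¹' Metric.closedBall 0 r) (by simp)
    ((convex_closedBall 0 r).linear_preimage f.toLinearMap)
    (f.toHomeomorph.isCompact_preimage.2 (isCompact_closedBall 0 r)) hvol.ge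
  refine ⟨x, hxL, hx0, ?_⟩
  rw [Set.mem_preimage, mem_closedBall_zero_iff, pi_norm_le_iff_of_nonneg hr] at hx
  simpa only [Fintype.card_fin] using norm_le_sqrt_card_mul_of_abs_repr_le e hr hx

lemma exists_norm_mul_norm_innerDual_le_finrank [Nontrivial E] (L : Submodule ℤ E)
    [DiscreteTopology L] [IsZLattice ℝ L] :
    ∃ x ∈ L, x ≠ 0 ∧ ∃ y ∈ innerDual L, y ≠ 0 ∧ ‖x‖ * ‖y‖ ≤ finrank ℝ E := by
  obtain ⟨x, hxL, hx0, hx⟩ := exists_ne_zero_norm_le_sqrt_mul_covolume_rpow L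
  obtain ⟨y, hyL, hy0, hy⟩ := exists_ne_zero_norm_le_sqrt_mul_covolume_rpow (innerDual L)
  have hcov := covolume_pos L volume
  refine ⟨x, hxL, hx0, y, hyL, hy0, (mul_le_mul hx hy (norm_nonneg y) (by positivity)).trans_eq ?_⟩
  rw [covolume_innerDual, mul_mul_mul_comm, Real.mul_self_sqrt (Nat.cast_nonneg _),
    ← Real.mul_rpow hcov.le (inv_nonneg.2 hcov.le), mul_inv_cancel₀ hcov.ne', Real.one_rpow,
    mul_one]

end Volume

lemma span_eq_top_of_le_norm_innerDual {L : Submodule ℤ E} {μ : ℝ} (hμ : 0 < μ)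
    (hL : ∀ y ∈ innerDual L, y ≠ 0 → μ ≤ ‖y‖) : span ℝ (L : Set E) = ⊤ := by
  by_contra hspan
  obtain ⟨y, hy, hy0⟩ := exists_mem_ne_zero_of_ne_bot
    (mt (orthogonal_eq_bot_iff (K := span ℝ (L : Set E))).1 hspan)
  have hmem : (μ / 2 / ‖y‖) • y ∈ innerDual L := mem_innerDual.2 fun x hx => ⟨0, by
    rw [inner_smul_right, (mem_orthogonal _ _).1 hy x (subset_span hx), mul_zero, Int.cast_zero]⟩
  have hnorm : ‖(μ / 2 / ‖y‖) • y‖ = μ / 2 := by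
    rw [norm_smul, Real.norm_of_nonneg (by positivity), div_mul_cancel₀ _ (norm_ne_zero_iff.2 hy0)]
  have := hL _ hmem (smul_ne_zero (by positivity) hy0)
  linarith

lemma exists_ne_zero_norm_le_finrank_div [Nontrivial E] {L : Submodule ℤ E} {μ : ℝ} (hμ : 0 < μ)
    (hL : ∀ y ∈ innerDual L, y ≠ 0 → μ ≤ ‖y‖) :
    ∃ x ∈ L, x ≠ 0 ∧ ‖x‖ ≤ finrank ℝ E / μ := by
  by_contra! hlong
  have hpos : 0 < finrank ℝ E / μ := div_pos (Nat.cast_pos.2 finrank_pos) hμ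
  have := discreteTopology_of_le_norm hpos fun x hx hx0 => (hlong x hx hx0).le
  have : IsZLattice ℝ L := ⟨span_eq_top_of_le_norm_innerDual hμ hL⟩
  borelize E
  obtain ⟨x, hx, hx0, y, hy, hy0, hxy⟩ := exists_norm_mul_norm_innerDual_le_finrank L
  refine (hlong x hx hx0).not_ge ((le_div_iff₀ hμ).2 (le_trans ?_ hxy))
  gcongr
  exact hL y hy hy0

end ShortVectors

section Covering

variable {E : Type*} [NormedAddCommGroup E] [InnerProductSpace ℝ E]

lemma exists_int_norm_sub_zsmul_sq_le (v z : E) :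
    ∃ m : ℤ, ‖z - m • v‖ ^ 2 ≤ ‖v‖ ^ 2 / 4 + ‖(ℝ ∙ v)ᗮ.orthogonalProjectionOnto z‖ ^ 2 := by
  obtain ⟨c, hc⟩ := mem_span_singleton.1 ((ℝ ∙ v).orthogonalProjectionOnto z).2
  have hround : (c - round c) ^ 2 ≤ 1 / 4 := by
    rw [← sq_abs]
    exact (pow_le_pow_left₀ (abs_nonneg _) (abs_sub_round c) 2).trans_eq (by norm_num)
  have hv : v ∈ ℝ ∙ v := mem_span_singleton_self v
  have hpar : ((ℝ ∙ v).orthogonalProjectionOnto (z - round c • v) : E) = (c - round c) • v := by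
    rw [map_sub, map_zsmul, orthogonalProjectionOnto_mem_subspace_eq_self ⟨v, hv⟩]
    simp [← hc, sub_smul, Int.cast_smul_eq_zsmul]
  have hperp : (ℝ ∙ v)ᗮ.orthogonalProjectionOnto (z - round c • v) =
      (ℝ ∙ v)ᗮ.orthogonalProjectionOnto z := by
    rw [map_sub, map_zsmul, orthogonalProjectionOnto_orthogonal_apply_eq_zero hv, smul_zero,
      sub_zero]
  refine ⟨round c, ?_⟩
  rw [norm_sq_eq_add_norm_sq_projection (z - round c • v) (ℝ ∙ v), hperp, coe_norm, hpar,
    norm_smul, mul_pow, Real.norm_eq_abs, sq_abs]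
  nlinarith [mul_le_mul_of_nonneg_right hround (sq_nonneg ‖v‖)]

lemma coe_mem_innerDual_of_mem_innerDual_map {K : Submodule ℝ E} [K.HasOrthogonalProjection]
    {L : Submodule ℤ E} {y : K}
    (hy : y ∈ innerDual (L.map (K.orthogonalProjectionOnto.toLinearMap.restrictScalars ℤ))) :
    (y : E) ∈ innerDual L := by
  refine mem_innerDual.2 fun x hx => ?_
  obtain ⟨n, hn⟩ := mem_innerDual.1 hy _ (mem_map_of_mem hx)
  exact ⟨n, by rw [← hn]; exact (inner_orthogonalProjectionOnto_eq_of_mem_right y x).symm⟩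

-- The factor `n * (n + 1) * (2 * n + 1) / 6` is the sum of the `j ^ 2` for `j ≤ n`: the vector
-- split off in dimension `j` has length at most `j / μ` and contributes `(j / (2 * μ)) ^ 2`.
lemma exists_norm_sub_sq_le_of_le_norm_innerDual (n : ℕ) {E : Type*} [NormedAddCommGroup E]
    [InnerProductSpace ℝ E] [FiniteDimensional ℝ E] (hE : finrank ℝ E = n) {L : Submodule ℤ E}
    {μ : ℝ} (hμ : 0 < μ) (hL : ∀ y ∈ innerDual L, y ≠ 0 → μ ≤ ‖y‖) (x : E) :
    ∃ v ∈ L, ‖x - v‖ ^ 2 ≤ n * (n + 1) * (2 * n + 1) / (24 * μ ^ 2) := by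
  induction n generalizing E with
  | zero =>
    have := finrank_zero_iff.1 hE
    exact ⟨0, L.zero_mem, by simp [Subsingleton.elim x 0]⟩
  | succ n ih =>
    have : Nontrivial E := nontrivial_of_finrank_eq_succ hE
    have : Fact (finrank ℝ E = n + 1) := ⟨hE⟩
    obtain ⟨v, hvL, hv0, hv⟩ := exists_ne_zero_norm_le_finrank_div hμ hL
    let p := (ℝ ∙ v)ᗮ.orthogonalProjectionOnto
    obtain ⟨_, ⟨l, hl, rfl⟩, hxl⟩ := ih (finrank_orthogonal_span_singleton hv0)
      (L := L.map (p.toLinearMap.restrictScalars ℤ))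
      (fun y hy hy0 => hL y (coe_mem_innerDual_of_mem_innerDual_map hy) (by simpa using hy0)) (p x)
    obtain ⟨m, hm⟩ := exists_int_norm_sub_zsmul_sq_le v (x - l)
    have hv2 : ‖v‖ ^ 2 ≤ (n + 1) ^ 2 / μ ^ 2 := by
      rw [hE] at hv
      exact (pow_le_pow_left₀ (norm_nonneg v) hv 2).trans_eq (by push_cast; ring)
    have hpx : ‖p (x - l)‖ ^ 2 ≤ n * (n + 1) * (2 * n + 1) / (24 * μ ^ 2) := by
      rw [map_sub]
      exact hxl
    refine ⟨l + m • v, L.add_mem hl (L.smul_mem m hvL), ?_⟩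
    calc ‖x - (l + m • v)‖ ^ 2 = ‖x - l - m • v‖ ^ 2 := by rw [sub_sub]
      _ ≤ (n + 1) ^ 2 / μ ^ 2 / 4 + n * (n + 1) * (2 * n + 1) / (24 * μ ^ 2) := by
          refine hm.trans ?_
          gcongr
      _ = _ := by push_cast; field_simp; ring

end Covering

section Constants

lemma Cd_pos (d : ℕ) : 0 < Cd d := by
  have := Real.Gamma_pos_of_pos (show (0 : ℝ) < 1 + d / 2 by positivity)
  rw [Cd]
  positivity

lemma Cd_zero : Cd 0 = 1 := by simp [Cd]

lemma Cd_one : Cd 1 = 1 := by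
  have hGamma : Real.Gamma (1 + 1 / 2) = 1 / 2 * √Real.pi := by
    rw [add_comm, Real.Gamma_add_one (by norm_num), Real.Gamma_one_half_eq]
  rw [Cd, Nat.cast_one, hGamma, ← Real.sqrt_eq_rpow]
  field_simp

lemma Cd_add_two (k : ℕ) : Cd (k + 2) = 2 * (k + 2) / Real.pi * Cd k := by
  have hGamma : Real.Gamma (1 + ((k + 2 : ℕ) : ℝ) / 2) =
      (1 + (k : ℝ) / 2) * Real.Gamma (1 + (k : ℝ) / 2) := by
    rw [← Real.Gamma_add_one (by positivity)]
    congr 1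
    push_cast
    ring
  have hpi : Real.pi ^ (((k + 2 : ℕ) : ℝ) / 2) = Real.pi ^ ((k : ℝ) / 2) * Real.pi := by
    rw [← Real.rpow_add_one Real.pi_ne_zero]
    congr 1
    push_cast
    ring
  rw [Cd, Cd, hGamma, hpi]
  field_simp
  ring

lemma Gamma_add_half_sq_le {x : ℝ} (hx : 0 < x) :
    Real.Gamma (x + 1 / 2) ^ 2 ≤ Real.Gamma x * Real.Gamma (x + 1) := by
  have h := Real.Gamma_mul_add_mul_le_rpow_Gamma_mul_rpow_Gamma hx (add_pos hx one_pos)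
    (a := 1 / 2) (b := 1 / 2) (by norm_num) (by norm_num) (by norm_num)
  have h0 := Real.Gamma_pos_of_pos hx
  have h1 := Real.Gamma_pos_of_pos (add_pos hx one_pos)
  have hmid := Real.Gamma_pos_of_pos (show 0 < x + 1 / 2 by positivity)
  rw [← Real.sqrt_eq_rpow, ← Real.sqrt_eq_rpow, ← Real.sqrt_mul h0.le,
    show 1 / 2 * x + 1 / 2 * (x + 1) = x + 1 / 2 by ring] at h
  exact (Real.le_sqrt hmid.le (by positivity)).1 h

lemma Cd_succ_sq_le (k : ℕ) : Cd (k + 1) ^ 2 ≤ Cd k * Cd (k + 2) := by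
  have hGamma := Gamma_add_half_sq_le (show (0 : ℝ) < 1 + k / 2 by positivity)
  have hpi : (Real.pi ^ (((k + 1 : ℕ) : ℝ) / 2)) ^ 2 =
      Real.pi ^ ((k : ℝ) / 2) * Real.pi ^ (((k + 2 : ℕ) : ℝ) / 2) := by
    rw [← Real.rpow_mul_natCast Real.pi_pos.le, ← Real.rpow_add Real.pi_pos]
    congr 1
    push_cast
    ring
  have h1 : 1 + ((k + 1 : ℕ) : ℝ) / 2 = 1 + (k : ℝ) / 2 + 1 / 2 := by push_cast; ring
  have h2 : 1 + ((k + 2 : ℕ) : ℝ) / 2 = 1 + (k : ℝ) / 2 + 1 := by push_cast; ring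
  calc Cd (k + 1) ^ 2
      = 2 ^ (2 * k + 2) * Real.Gamma (1 + (k : ℝ) / 2 + 1 / 2) ^ 2 /
          (Real.pi ^ ((k : ℝ) / 2) * Real.pi ^ (((k + 2 : ℕ) : ℝ) / 2)) := by
        rw [Cd, h1, div_pow, hpi]; ring
    _ ≤ 2 ^ (2 * k + 2) * (Real.Gamma (1 + (k : ℝ) / 2) * Real.Gamma (1 + (k : ℝ) / 2 + 1)) /
          (Real.pi ^ ((k : ℝ) / 2) * Real.pi ^ (((k + 2 : ℕ) : ℝ) / 2)) := by gcongr
    _ = Cd k * Cd (k + 2) := by rw [Cd, Cd, h2]; ring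

lemma two_mul_Cd_succ_sq_le (k : ℕ) :
    2 * (k + 2) * Cd (k + 1) ^ 2 ≤ Real.pi * Cd (k + 2) ^ 2 := by
  calc 2 * (k + 2) * Cd (k + 1) ^ 2 ≤ 2 * (k + 2) * (Cd k * Cd (k + 2)) := by
        gcongr; exact Cd_succ_sq_le k
    _ = Real.pi * Cd (k + 2) ^ 2 := by
        rw [sq, Cd_add_two]
        field_simp

lemma sqrt_mul_Cd_le_mul_Cd_succ (k : ℕ) :
    √((k + 1) * (k + 2) * (2 * k + 3) / 6) * Cd k ≤ (k + 1) * Cd (k + 1) := by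
  rcases k with _ | k
  · norm_num [Cd_zero, Cd_one]
  have hk : (k + 3 : ℝ) * (2 * k + 5) * Real.pi ≤ 12 * (k + 2) ^ 2 := by
    nlinarith [Real.pi_lt_d2, Nat.cast_nonneg (α := ℝ) k,
      mul_nonneg (Nat.cast_nonneg (α := ℝ) k) (Nat.cast_nonneg (α := ℝ) k)]
  have hC := two_mul_Cd_succ_sq_le k
  have h1 := Cd_pos (k + 1)
  have h2 := Cd_pos (k + 2)
  refine abs_le_of_sq_le_sq' ?_ (by positivity) |>.2
  rw [mul_pow, Real.sq_sqrt (by positivity)]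
  push_cast
  have hpi := Real.pi_pos
  refine le_of_mul_le_mul_left ?_ hpi
  calc Real.pi * ((k + 1 + 1) * (k + 1 + 2) * (2 * (k + 1) + 3) / 6 * Cd (k + 1) ^ 2)
      = (k + 2) / 6 * ((k + 3) * (2 * k + 5) * Real.pi) * Cd (k + 1) ^ 2 := by ring
    _ ≤ (k + 2) / 6 * (12 * (k + 2) ^ 2) * Cd (k + 1) ^ 2 := by gcongr
    _ = (k + 2) ^ 2 * (2 * (k + 2) * Cd (k + 1) ^ 2) := by ring
    _ ≤ (k + 2) ^ 2 * (Real.pi * Cd (k + 2) ^ 2) := by gcongr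
    _ = Real.pi * ((k + 1 + 1) * Cd (k + 1 + 1)) ^ 2 := by ring

end Constants

section Separation

variable {E : Type*} [NormedAddCommGroup E] [InnerProductSpace ℝ E] [FiniteDimensional ℝ E]

/-- The open cylinder of radius `r` along the subspace `K` and radius `s` orthogonally to it. -/
def orthogonalCylinder (K : Submodule ℝ E) (r s : ℝ) : Set E :=
  {y | ‖K.orthogonalProjectionOnto y‖ < r ∧ ‖Kᗮ.orthogonalProjectionOnto y‖ < s}

lemma convex_orthogonalCylinder (K : Submodule ℝ E) (r s : ℝ) :
    Convex ℝ (orthogonalCylinder K r s) := by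
  have := ((convex_ball 0 r).linear_preimage K.orthogonalProjectionOnto.toLinearMap).inter
    ((convex_ball 0 s).linear_preimage Kᗮ.orthogonalProjectionOnto.toLinearMap)
  simpa [orthogonalCylinder, Set.preimage, Set.inter_def] using this

lemma neg_mem_orthogonalCylinder {K : Submodule ℝ E} {r s : ℝ} {y : E}
    (hy : y ∈ orthogonalCylinder K r s) : -y ∈ orthogonalCylinder K r s := by
  simpa only [orthogonalCylinder, Set.mem_ofPred_eq, map_neg, norm_neg] using hy

lemma norm_lt_of_mem_orthogonalCylinder {L : Submodule ℤ E} {x y : E} (hx : x ∈ innerDual L)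
    (hx0 : x ≠ 0) (hy : y ∈ L) {s : ℝ} (hcyl : y ∈ orthogonalCylinder (ℝ ∙ x) ‖x‖⁻¹ s) :
    ‖y‖ < s := by
  obtain ⟨hpar, hperp⟩ := hcyl
  obtain ⟨n, hn⟩ := mem_innerDual.1 hx y hy
  have hlt : |⟪y, x⟫| < 1 := by
    calc |⟪y, x⟫| = |⟪(ℝ ∙ x).orthogonalProjectionOnto y, ⟨x, mem_span_singleton_self x⟩⟫| := by
          rw [inner_orthogonalProjectionOnto_eq_of_mem_right]
      _ ≤ ‖(ℝ ∙ x).orthogonalProjectionOnto y‖ * ‖x‖ := abs_real_inner_le_norm _ _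
      _ < 1 := (lt_mul_inv_iff₀ (norm_pos_iff.2 hx0)).1 (by rwa [one_mul])
  have hzero : ⟪y, x⟫ = 0 := by
    rw [hn] at hlt ⊢
    exact_mod_cast Int.abs_lt_one_iff.1 (by exact_mod_cast hlt)
  have hmem : y ∈ (ℝ ∙ x)ᗮ := mem_orthogonal_singleton_iff_inner_left.2 hzero
  rwa [orthogonalProjectionOnto_mem_subspace_eq_self ⟨y, hmem⟩] at hperp

variable [MeasurableSpace E] [BorelSpace E]

lemma volume_ball_eq_div_Cd (x : E) {r : ℝ} (hr : 0 < r) :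
    volume (Metric.ball x r) = ENNReal.ofReal ((2 * r) ^ finrank ℝ E / Cd (finrank ℝ E)) := by
  rcases subsingleton_or_nontrivial E with hE | hE
  · have hvol := (stdOrthonormalBasis ℝ E).volume_parallelepiped
    rw [Subsingleton.eq_univ_of_nonempty
      (nonempty_of_measure_ne_zero (hvol.trans_ne one_ne_zero))] at hvol
    rw [Subsingleton.eq_univ_of_nonempty ⟨x, Metric.mem_ball_self hr⟩, hvol,
      finrank_zero_of_subsingleton, Cd_zero, pow_zero, div_one, ENNReal.ofReal_one]
  · rw [InnerProductSpace.volume_ball, ← ENNReal.ofReal_pow hr.le,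
      ← ENNReal.ofReal_mul (by positivity), Cd]
    congr 1
    rw [Real.sqrt_eq_rpow, ← Real.rpow_mul_natCast Real.pi_pos.le, mul_pow, add_comm (1 : ℝ),
      one_div_mul_eq_div]
    field_simp

lemma volume_orthogonalCylinder (K : Submodule ℝ E) {r s : ℝ} (hr : 0 < r) (hs : 0 < s) :
    volume (orthogonalCylinder K r s) = ENNReal.ofReal
      ((2 * r) ^ finrank ℝ K / Cd (finrank ℝ K) *
        ((2 * s) ^ finrank ℝ Kᗮ / Cd (finrank ℝ Kᗮ))) := by
  have hf := (WithLp.volume_preserving_ofLp K Kᗮ).comp K.orthogonalDecomposition.measurePreserving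
  have hpre : orthogonalCylinder K r s =
      (WithLp.ofLp ∘ K.orthogonalDecomposition) ⁻¹' (Metric.ball 0 r ×ˢ Metric.ball 0 s) := by
    ext y
    simp [orthogonalCylinder, orthogonalDecomposition_apply]
  have := Cd_pos (finrank ℝ K)
  rw [hpre, hf.measure_preimage
    (measurableSet_ball.prod measurableSet_ball).nullMeasurableSet, Measure.volume_eq_prod,
    Measure.prod_prod, volume_ball_eq_div_Cd _ hr, volume_ball_eq_div_Cd _ hs,
    ENNReal.ofReal_mul (by positivity)]

lemma pow_le_Cd_mul_covolume_mul_norm {k : ℕ} (hE : finrank ℝ E = k + 1) {L : Submodule ℤ E}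
    [DiscreteTopology L] [IsZLattice ℝ L] {μ : ℝ} (hμ : 0 < μ) (hL : ∀ y ∈ L, y ≠ 0 → μ ≤ ‖y‖)
    {x : E} (hx : x ∈ innerDual L) (hx0 : x ≠ 0) :
    μ ^ k ≤ Cd k * covolume L * ‖x‖ := by
  by_contra! hlt
  have : Fact (finrank ℝ E = k + 1) := ⟨hE⟩
  have hxpos := norm_pos_iff.2 hx0
  have hC := Cd_pos k
  have hlarge : ENNReal.ofReal (covolume L) * 2 ^ finrank ℝ E <
      volume (orthogonalCylinder (ℝ ∙ x) ‖x‖⁻¹ μ) := by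
    rw [volume_orthogonalCylinder _ (inv_pos.2 hxpos) hμ, finrank_span_singleton hx0,
      finrank_orthogonal_span_singleton (n := k) hx0, Cd_one, hE, ← ENNReal.ofReal_ofNat,
      ← ENNReal.ofReal_pow zero_le_two, ← ENNReal.ofReal_mul (covolume_pos L volume).le,
      ENNReal.ofReal_lt_ofReal_iff (by positivity)]
    calc covolume L * 2 ^ (k + 1)
        = 2 ^ (k + 1) / (Cd k * ‖x‖) * (Cd k * covolume L * ‖x‖) := by field_simp
      _ < 2 ^ (k + 1) / (Cd k * ‖x‖) * μ ^ k := by gcongr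
      _ = (2 * ‖x‖⁻¹) ^ 1 / 1 * ((2 * μ) ^ k / Cd k) := by field_simp; ring
  obtain ⟨y, hy, hy0, hcyl⟩ := exists_ne_zero_mem_of_covolume_mul_lt_measure volume L
    (fun _ => neg_mem_orthogonalCylinder) (convex_orthogonalCylinder _ _ _) hlarge
  exact (norm_lt_of_mem_orthogonalCylinder hx hx0 hy hcyl).not_ge (hL y hy hy0)

end Separation

section MeshRatio

variable {d k : ℕ} {μ : ℝ}

lemma covRad_le_of_le_norm_innerDual {L : Submodule ℤ (Euc d)} (hμ : 0 < μ)
    (hL : ∀ y ∈ innerDual L, y ≠ 0 → μ ≤ ‖y‖) :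
    covRad (L : Set (Euc d)) ≤ √(d * (d + 1) * (2 * d + 1) / 6) / (2 * μ) := by
  refine ciSup_le fun x => ?_
  obtain ⟨v, hv, hxv⟩ :=
    exists_norm_sub_sq_le_of_le_norm_innerDual d (finrank_euclideanSpace_fin) hμ hL x
  have hbdd : BddBelow (dist x '' (L : Set (Euc d))) :=
    ⟨0, by rintro _ ⟨z, _, rfl⟩; exact dist_nonneg⟩
  refine (csInf_le hbdd (Set.mem_image_of_mem _ hv)).trans ?_
  rw [dist_eq_norm]
  refine abs_le_of_sq_le_sq' ?_ (by positivity) |>.2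
  rw [div_pow, Real.sq_sqrt (by positivity)]
  exact hxv.trans_eq (by field_simp; ring)

lemma le_sepRad_of_le_norm_innerDual {L : Submodule ℤ (Euc (k + 1))} [DiscreteTopology L]
    [IsZLattice ℝ L] (hμ : 0 < μ) (hL : ∀ y ∈ innerDual L, y ≠ 0 → μ ≤ ‖y‖) :
    μ ^ k * covolume L / (2 * Cd k) ≤ sepRad (L : Set (Euc (k + 1))) := by
  have hC := Cd_pos k
  have hcov := covolume_pos L volume
  have hmin : μ ^ k * covolume L / Cd k ≤ sInf (norm '' ((L : Set (Euc (k + 1))) \ {0})) := by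
    obtain ⟨x₀, hx₀, hx₀0, -⟩ := exists_ne_zero_norm_le_sqrt_mul_covolume_rpow L
    refine le_csInf ⟨_, x₀, ⟨hx₀, hx₀0⟩, rfl⟩ ?_
    rintro _ ⟨x, ⟨hx, hx0⟩, rfl⟩
    have := pow_le_Cd_mul_covolume_mul_norm finrank_euclideanSpace_fin hμ hL
      (mem_innerDual_innerDual hx) hx0
    rw [covolume_innerDual] at this
    rw [div_le_iff₀ hC, ← le_div_iff₀ hcov]
    exact this.trans_eq (by ring)
  calc μ ^ k * covolume L / (2 * Cd k) = 1 / 2 * (μ ^ k * covolume L / Cd k) := by field_simp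
    _ ≤ _ := mul_le_mul_of_nonneg_left hmin (by norm_num)

lemma meshRatio_le_of_le_norm_innerDual {L : Submodule ℤ (Euc (k + 1))} [DiscreteTopology L]
    [IsZLattice ℝ L] (hμ : 0 < μ) (hL : ∀ y ∈ innerDual L, y ≠ 0 → μ ≤ ‖y‖) :
    meshRatio (L : Set (Euc (k + 1))) ≤
      (k + 1 : ℕ) * Cd (k + 1) / (covolume L * μ ^ (k + 1)) := by
  have hC := Cd_pos k
  have hcov := covolume_pos L volume
  calc meshRatio (L : Set (Euc (k + 1)))
      ≤ √((k + 1 : ℕ) * ((k + 1 : ℕ) + 1) * (2 * (k + 1 : ℕ) + 1) / 6) / (2 * μ) /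
          (μ ^ k * covolume L / (2 * Cd k)) :=
        div_le_div₀ (by positivity) (covRad_le_of_le_norm_innerDual hμ hL) (by positivity)
          (le_sepRad_of_le_norm_innerDual hμ hL)
    _ = √((k + 1) * (k + 2) * (2 * k + 3) / 6) * Cd k / (covolume L * μ ^ (k + 1)) := by
        push_cast
        field_simp
        ring_nf
    _ ≤ _ := by
        refine div_le_div_of_nonneg_right ?_ (by positivity)
        exact_mod_cast sqrt_mul_Cd_le_mul_Cd_succ k

lemma IsLatticeOf.exists_basis {Λ : Set (Euc d)} {T : Matrix (Fin d) (Fin d) ℝ}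
    (hΛ : IsLatticeOf Λ T) :
    ∃ b : Basis (Fin d) ℝ (Euc d), (span ℤ (Set.range b) : Set (Euc d)) = Λ ∧
      covolume (span ℤ (Set.range b)) = |T.det| := by
  let e := EuclideanSpace.basisFun (Fin d) ℝ
  let v : Fin d → Euc d := fun j => WithLp.toLp 2 fun i => T i j
  have hdet : e.toBasis.det v = T.det := rfl
  obtain ⟨hli, hspan⟩ := (Basis.is_basis_iff_det e.toBasis).2 (hdet ▸ hΛ.1)
  let b := Basis.mk hli hspan.ge
  have hb : ⇑b = v := Basis.coe_mk hli hspan.ge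
  refine ⟨b, ?_, by rw [covolume_span_basis e, hb, hdet]⟩
  ext x
  rw [hΛ.2, SetLike.mem_coe, hb, mem_span_range_iff_exists_fun]
  refine exists_congr fun c => ?_
  rw [PiLp.ext_iff]
  refine forall_congr' fun i => ?_
  simp [v, eq_comm, mul_comm]

lemma IsLatticeOf.meshRatio_le {Λ : Set (Euc (k + 1))} {T : Matrix (Fin (k + 1)) (Fin (k + 1)) ℝ}
    (hΛ : IsLatticeOf Λ T) (hμ : 0 < μ) (hdual : ∀ y ∈ dualLat Λ, y ≠ 0 → μ ≤ ‖y‖) :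
    meshRatio Λ ≤ (k + 1 : ℕ) * Cd (k + 1) / (|T.det| * μ ^ (k + 1)) := by
  obtain ⟨b, rfl, hcov⟩ := hΛ.exists_basis
  rw [dualLat_coe] at hdual
  exact hcov ▸ meshRatio_le_of_le_norm_innerDual hμ hdual

lemma IsLatticeOf.exists_ne_zero_mem_dualLat {Λ : Set (Euc (k + 1))}
    {T : Matrix (Fin (k + 1)) (Fin (k + 1)) ℝ} (hΛ : IsLatticeOf Λ T) :
    ∃ y ∈ dualLat Λ, y ≠ 0 := by
  obtain ⟨b, rfl, -⟩ := hΛ.exists_basis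
  obtain ⟨y, hy, hy0, -⟩ :=
    exists_ne_zero_norm_le_sqrt_mul_covolume_rpow (innerDual (span ℤ (Set.range b)))
  exact ⟨y, by rwa [dualLat_coe], hy0⟩

end MeshRatio

section SuccMin

variable {d : ℕ} {Λ : Set (Euc d)}

lemma one_le_finrank_span_inter_closedBall_iff {r : ℝ} :
    1 ≤ finrank ℝ (span ℝ (Λ ∩ Metric.closedBall 0 r)) ↔ ∃ y ∈ Λ, y ≠ 0 ∧ ‖y‖ ≤ r := by
  rw [one_le_finrank_iff, ne_eq, span_eq_bot]
  simp only [Set.mem_inter_iff, mem_closedBall_zero_iff]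
  grind

lemma succMin_one_le_norm {y : Euc d} (hy : y ∈ Λ) (hy0 : y ≠ 0) : succMin Λ 1 ≤ ‖y‖ :=
  csInf_le ⟨0, fun _ hr => hr.1.le⟩
    ⟨norm_pos_iff.2 hy0, one_le_finrank_span_inter_closedBall_iff.2 ⟨y, hy, hy0, le_rfl⟩⟩

lemma le_succMin_one {s : ℝ} (hne : ∃ y ∈ Λ, y ≠ 0) (h : ∀ y ∈ Λ, y ≠ 0 → s ≤ ‖y‖) :
    s ≤ succMin Λ 1 := by
  obtain ⟨y, hy, hy0⟩ := hne
  refine le_csInf ⟨‖y‖, norm_pos_iff.2 hy0,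
    one_le_finrank_span_inter_closedBall_iff.2 ⟨y, hy, hy0, le_rfl⟩⟩ ?_
  rintro r ⟨-, hr⟩
  obtain ⟨z, hz, hz0, hzr⟩ := one_le_finrank_span_inter_closedBall_iff.1 hr
  exact (h z hz hz0).trans hzr

end SuccMin

section Korobov

/-- The generating matrix of the Korobov lattice obtained from the identity matrix by replacing the
first column with `(1, a, …, a ^ k) / N`; the dimension is `k + 1` so that this column exists. -/
def korobovMatrix (k N a : ℕ) : Matrix (Fin (k + 1)) (Fin (k + 1)) ℝ :=
  fun i j => if j = 0 then (a : ℝ) ^ (i : ℕ) / N else if i = j then 1 else 0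

lemma det_korobovMatrix (k N a : ℕ) : (korobovMatrix k N a).det = (N : ℝ)⁻¹ := by
  rw [Matrix.det_of_isLowerTriangular]
  · simp [korobovMatrix]
  · intro i j hij
    have hij : i < j := hij
    simp [korobovMatrix, hij.ne, ((Fin.zero_le i).trans_lt hij).ne']

lemma sum_korobovMatrix_mul (k N a : ℕ) (c : Fin (k + 1) → ℝ) (i : Fin (k + 1)) :
    ∑ j, korobovMatrix k N a i j * c j =
      (a : ℝ) ^ (i : ℕ) / N * c 0 + if i = 0 then 0 else c i := by
  rw [Fin.sum_univ_succ]
  refine Fin.cases ?_ (fun j => ?_) i <;> simp [korobovMatrix, (Fin.succ_ne_zero _).symm]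

-- The missing generator is recovered from `e₀ = N • g - ∑ i > 0, a ^ i • e i`,
-- where `g = (1, a, …, a ^ k) / N`.
lemma isLatticeOf_korobovLat (k a : ℕ) {N : ℕ} (hN : N ≠ 0) :
    IsLatticeOf (korobovLat (k + 1) N a) (korobovMatrix k N a) := by
  have hN' : (N : ℝ) ≠ 0 := Nat.cast_ne_zero.2 hN
  refine ⟨by rw [det_korobovMatrix]; exact (inv_ne_zero hN').isUnit, Set.ext fun v => ⟨?_, ?_⟩⟩
  · rintro ⟨n, m, hv⟩
    refine ⟨fun i => if i = 0 then n + N * m 0 else m i - m 0 * a ^ (i : ℕ), fun i => ?_⟩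
    rw [hv, sum_korobovMatrix_mul]
    obtain rfl | hi := eq_or_ne i 0
    · simp only [Fin.val_zero, pow_zero, mul_one, ↓reduceIte, Int.cast_add, Int.cast_mul,
        Int.cast_natCast, add_zero]
      field_simp
    · simp only [hi, ↓reduceIte, Int.cast_add, Int.cast_sub, Int.cast_mul, Int.cast_pow,
        Int.cast_natCast]
      field_simp
      ring
  · rintro ⟨l, hv⟩
    refine ⟨l 0, fun i => if i = 0 then 0 else l i, fun i => ?_⟩
    rw [hv, sum_korobovMatrix_mul]
    push_cast
    ring

lemma single_mem_korobovLat {d : ℕ} (N a : ℕ) (i : Fin d) :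
    EuclideanSpace.single i (1 : ℝ) ∈ korobovLat d N a :=
  ⟨0, Pi.single i 1, fun j => by by_cases hj : j = i <;> simp [hj]⟩

lemma exists_int_of_mem_dualLat_korobovLat {d N a : ℕ} (hN : N ≠ 0) {y : Euc d}
    (hy : y ∈ dualLat (korobovLat d N a)) :
    ∃ h : Fin d → ℤ, (∀ i, y i = h i) ∧ (N : ℤ) ∣ ∑ i, h i * (a : ℤ) ^ (i : ℕ) := by
  have hint (i) : ∃ n : ℤ, y i = n := by
    obtain ⟨n, hn⟩ := hy _ (single_mem_korobovLat N a i)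
    exact ⟨n, by rw [← hn, EuclideanSpace.inner_single_left, map_one, one_mul]⟩
  choose h hh using hint
  obtain ⟨n, hn⟩ := hy (WithLp.toLp 2 fun i => (a : ℝ) ^ (i : ℕ) / N) ⟨1, 0, fun j => by simp⟩
  refine ⟨h, hh, n, ?_⟩
  have hsum : ∑ i, (h i : ℝ) * (a : ℝ) ^ (i : ℕ) = N * n := by
    rw [← hn, PiLp.inner_apply, Finset.mul_sum]
    refine Finset.sum_congr rfl fun i _ => ?_
    rw [hh, RCLike.inner_apply, conj_trivial]
    field_simp
  exact_mod_cast hsum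

end Korobov

section Counting

open Polynomial

lemma exists_forall_not_isRoot {ι R : Type*} [CommRing R] [IsDomain R] {A : Finset R}
    {S : Finset ι} {p : ι → R[X]} {m : ℕ} (hp0 : ∀ i ∈ S, p i ≠ 0)
    (hdeg : ∀ i ∈ S, (p i).natDegree ≤ m) (hcard : S.card * m < A.card) :
    ∃ a ∈ A, ∀ i ∈ S, ¬ (p i).IsRoot a := by
  classical
  have hroots : (S.biUnion fun i => (p i).roots.toFinset).card < A.card :=
    (Finset.card_biUnion_le_card_mul _ _ m fun i hi =>
      (Multiset.toFinset_card_le _).trans ((card_roots' (p i)).trans (hdeg i hi))).trans_lt hcard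
  obtain ⟨a, ha, haS⟩ := Finset.exists_mem_notMem_of_card_lt_card hroots
  refine ⟨a, ha, fun i hi hroot => haS (Finset.mem_biUnion.2 ⟨i, hi, ?_⟩)⟩
  exact Multiset.mem_toFinset.2 ((mem_roots (hp0 i hi)).2 hroot)

lemma eval_ofFn {R : Type*} [CommSemiring R] [DecidableEq R] {d : ℕ} (v : Fin d → R) (a : R) :
    (ofFn d v).eval a = ∑ i, v i * a ^ (i : ℕ) := by
  simp only [ofFn_eq_sum_monomial, eval_finsetSum, eval_monomial]

lemma card_piFinset_Icc_erase_zero (d R : ℕ) :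
    ((Fintype.piFinset fun _ : Fin d => Finset.Icc (-(R : ℤ)) R).erase 0).card =
      (2 * R + 1) ^ d - 1 := by
  have hcard : (Finset.Icc (-(R : ℤ)) R).card = 2 * R + 1 := by
    rw [Int.card_Icc]
    omega
  rw [Finset.card_erase_of_mem (by simp), Fintype.card_piFinset_const, hcard]

lemma intCast_comp_ne_zero {ι : Type*} {N R : ℕ} (hRN : R < N) {h : ι → ℤ} (h0 : h ≠ 0)
    (hR : ∀ i, |h i| ≤ R) : (fun i => (h i : ZMod N)) ≠ 0 := by
  contrapose! h0
  funext i
  refine Int.eq_zero_of_abs_lt_dvd ((ZMod.intCast_zmod_eq_zero_iff_dvd _ _).1 (congrFun h0 i)) ?_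
  exact (hR i).trans_lt (by exact_mod_cast hRN)

lemma exists_forall_not_dvd_sum_mul_pow {d N R : ℕ} (hN : N.Prime) (hRN : R < N)
    (hcard : ((2 * R + 1) ^ d - 1) * (d - 1) < N - 1) :
    ∃ a : ℕ, 1 ≤ a ∧ a ≤ N - 1 ∧ ∀ h : Fin d → ℤ, h ≠ 0 → (∀ i, |h i| ≤ R) →
      ¬ (N : ℤ) ∣ ∑ i, h i * (a : ℤ) ^ (i : ℕ) := by
  have : Fact N.Prime := ⟨hN⟩
  let H := (Fintype.piFinset fun _ : Fin d => Finset.Icc (-(R : ℤ)) R).erase 0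
  let p (h : Fin d → ℤ) : (ZMod N)[X] := ofFn d fun i => (h i : ZMod N)
  have mem_H (h : Fin d → ℤ) : h ∈ H ↔ h ≠ 0 ∧ ∀ i, |h i| ≤ R := by
    simp only [H, Finset.mem_erase, Fintype.mem_piFinset, Finset.mem_Icc, abs_le]
  have hp0 : ∀ h ∈ H, p h ≠ 0 := fun h hh =>
    (map_ne_zero_iff _ (injective_ofFn d)).2
      (intCast_comp_ne_zero hRN ((mem_H h).1 hh).1 ((mem_H h).1 hh).2)
  have hdeg : ∀ h ∈ H, (p h).natDegree ≤ d - 1 := fun h hh =>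
    Nat.le_sub_one_of_lt ((natDegree_lt_iff_degree_lt (hp0 h hh)).2 (ofFn_degree_lt _))
  obtain ⟨α, hα, hroot⟩ := exists_forall_not_isRoot (A := Finset.univ.erase 0) hp0 hdeg (by
    rwa [card_piFinset_Icc_erase_zero, Finset.card_erase_of_mem (Finset.mem_univ _),
      Finset.card_univ, ZMod.card])
  have hα0 : α.val ≠ 0 := (ZMod.val_ne_zero α).2 (Finset.ne_of_mem_erase hα)
  refine ⟨α.val, by lia, by have := α.val_lt; lia, fun h h0 hR hdvd => ?_⟩
  refine hroot h ((mem_H h).2 ⟨h0, hR⟩) ?_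
  rw [IsRoot.def, eval_ofFn]
  simpa using (ZMod.intCast_zmod_eq_zero_iff_dvd _ _).2 hdvd

lemma two_mul_mul_two_mul_add_one_pow_le {d R : ℕ} (hd : d ≠ 0) (hR : R ≠ 0) :
    2 * d * (2 * R + 1) ^ d ≤ (6 * d * R) ^ d :=
  calc 2 * d * (2 * R + 1) ^ d ≤ (2 * d) ^ d * (3 * R) ^ d := by
        gcongr
        · exact Nat.le_self_pow hd _
        · lia
    _ = (6 * d * R) ^ d := by rw [← mul_pow]; ring

lemma two_mul_add_one_pow_sub_one_mul_lt {d N R : ℕ} (hN : 2 ≤ N) (hd : d ≠ 0)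
    (hR : (6 * d * R) ^ d ≤ N) :
    ((2 * R + 1) ^ d - 1) * (d - 1) < N - 1 := by
  obtain rfl | hR0 := eq_or_ne R 0
  · simp only [mul_zero, zero_add, one_pow, Nat.sub_self, zero_mul]
    lia
  have hle := (two_mul_mul_two_mul_add_one_pow_le hd hR0).trans hR
  have hpos : 0 < (2 * R + 1) ^ d := by positivity
  calc ((2 * R + 1) ^ d - 1) * (d - 1) ≤ ((2 * R + 1) ^ d - 1) * d := by gcongr; lia
    _ < (2 * R + 1) ^ d * d := by gcongr; lia
    _ ≤ N - 1 := by lia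

lemma lt_of_six_mul_pow_le {d N R : ℕ} (hN : 0 < N) (hd : d ≠ 0) (hR : (6 * d * R) ^ d ≤ N) :
    R < N := by
  obtain rfl | hR0 := eq_or_ne R 0
  · exact hN
  calc R < 6 * d * R := lt_mul_of_one_lt_left (by lia) (by lia)
    _ ≤ (6 * d * R) ^ d := Nat.le_self_pow hd _
    _ ≤ N := hR

end Counting

section GoodParameter

lemma mul_rpow_one_div_pow {d : ℕ} (hd : d ≠ 0) (C : ℝ) {x : ℝ} (hx : 0 ≤ x) :
    (C * x ^ ((1 : ℝ) / d)) ^ d = C ^ d * x := by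
  rw [mul_pow, one_div, Real.rpow_inv_natCast_pow hx hd]

lemma exists_forall_le_norm_dualLat_korobovLat {d N : ℕ} (hd : d ≠ 0) (hN : N.Prime) :
    ∃ a : ℕ, 1 ≤ a ∧ a ≤ N - 1 ∧ ∀ y ∈ dualLat (korobovLat d N a), y ≠ 0 →
      1 / (6 * d) * (N : ℝ) ^ ((1 : ℝ) / d) ≤ ‖y‖ := by
  set s : ℝ := 1 / (6 * d) * (N : ℝ) ^ ((1 : ℝ) / d) with hs
  have hfloor : (6 * d * ⌊s⌋₊) ^ d ≤ N := by
    have hscaled : (6 * d * s) ^ d = N := by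
      rw [hs, ← mul_assoc, mul_one_div_cancel (by positivity), mul_rpow_one_div_pow hd _
        N.cast_nonneg, one_pow, one_mul]
    have : (6 * d * (⌊s⌋₊ : ℝ)) ^ d ≤ N := by
      rw [← hscaled]
      gcongr
      exact Nat.floor_le (by positivity)
    exact_mod_cast this
  obtain ⟨a, ha1, haN, ha⟩ := exists_forall_not_dvd_sum_mul_pow hN
    (lt_of_six_mul_pow_le hN.pos hd hfloor) (two_mul_add_one_pow_sub_one_mul_lt hN.two_le hd hfloor)
  refine ⟨a, ha1, haN, fun y hy hy0 => ?_⟩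
  obtain ⟨h, hh, hdvd⟩ := exists_int_of_mem_dualLat_korobovLat hN.ne_zero hy
  contrapose! hdvd with hlt
  refine ha h ?_ fun i => ?_
  · rintro rfl
    exact hy0 (PiLp.ext fun i => by simp [hh])
  · have hcoord : |(h i : ℝ)| ≤ s := by
      rw [← hh, ← Real.norm_eq_abs]
      exact (PiLp.norm_apply_le y i).trans hlt.le
    rw [Int.abs_eq_natAbs]
    exact_mod_cast Nat.le_floor (by rwa [Nat.cast_natAbs, Int.cast_abs] : ((h i).natAbs : ℝ) ≤ s)

end GoodParameter

theorem stmt18 (d : ℕ) (hd : 1 ≤ d) :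
    ∃ c : ℝ, 0 < c ∧ ∀ N : ℕ, N.Prime → ∃ a : ℕ, 1 ≤ a ∧ a ≤ N - 1 ∧
      succMin (dualLat (korobovLat d N a)) 1 ≥ c * (N : ℝ) ^ ((1 : ℝ) / d) ∧
      meshRatio (korobovLat d N a) ≤
        d * Cd d * N / (succMin (dualLat (korobovLat d N a)) 1) ^ d ∧
      d * Cd d * N / (succMin (dualLat (korobovLat d N a)) 1) ^ d ≤
        d * Cd d / c ^ d := by
  have hd0 : d ≠ 0 := Nat.one_le_iff_ne_zero.1 hd
  refine ⟨1 / (6 * d), by positivity, fun N hN => ?_⟩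
  obtain ⟨a, ha1, haN, ha⟩ := exists_forall_le_norm_dualLat_korobovLat hd0 hN
  obtain ⟨k, rfl⟩ := Nat.exists_eq_succ_of_ne_zero hd0
  have hN0 : (0 : ℝ) < N := Nat.cast_pos.2 hN.pos
  have hΛ := isLatticeOf_korobovLat k a hN.ne_zero
  have hmin := le_succMin_one hΛ.exists_ne_zero_mem_dualLat ha
  have hmin_pos := (show (0 : ℝ) < _ by positivity).trans_le hmin
  refine ⟨a, ha1, haN, hmin, ?_, ?_⟩
  · refine (hΛ.meshRatio_le hmin_pos fun y => succMin_one_le_norm).trans_eq ?_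
    rw [det_korobovMatrix, abs_of_pos (inv_pos.2 hN0)]
    field_simp
  · have hpow := pow_le_pow_left₀ (by positivity) hmin (k + 1)
    rw [mul_rpow_one_div_pow hd0 _ hN0.le] at hpow
    have hC := Cd_pos (k + 1)
    calc _ ≤ ((k + 1 : ℕ) * Cd (k + 1) * N : ℝ) / ((1 / (6 * (k + 1 : ℕ))) ^ (k + 1) * N) :=
          div_le_div_of_nonneg_left (by positivity) (by positivity) hpow
      _ = _ := mul_div_mul_right _ _ hN0.ne'

end
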